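/- Let Γ be a regular nicely distance-balanced graph with valency k = 3, diameter d ≥ 3 and γ(Γ) = d+1. Then d ≠ 5. -/

import Mathlib

open SimpleGraph Finset

/-- `W_{u,v}`: the set of vertices strictly closer to `u` than to `v`. -/
noncomputable def ndbW {V : Type*} [Fintype V] (G : SimpleGraph V) (u v : V) : Finset V :=
  Finset.univ.filter fun x => G.dist x u < G.dist x v

/-- `D^i_j(u,v)`: the set of vertices at distance `i` from `u` and `j` from `v`. -/
noncomputable def ndbD {V : Type*} [Fintype V] (G : SimpleGraph V) (u v : V) (i j : ℕ) : Finset V :=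
  Finset.univ.filter fun x => G.dist x u = i ∧ G.dist x v = j

/-- `G` is nicely distance-balanced with constant `γ`. -/
def IsNDB {V : Type*} [Fintype V] (G : SimpleGraph V) (γ : ℕ) : Prop :=
  ∀ u v : V, G.Adj u v → (ndbW G u v).card = γ ∧ (ndbW G v u).card = γ

/-- `G` has diameter `d`. -/
def HasDiam {V : Type*} [Fintype V] (G : SimpleGraph V) (d : ℕ) : Prop :=
  (∀ u v : V, G.dist u v ≤ d) ∧ ∃ u v : V, G.dist u v = d

/-!
Let `uv` be an edge with a vertex of `W = ndbW G v u` at distance at least `γ - 1` from `u`. The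
set `W` has `γ` elements and occupies at least `γ - 1` distance levels, so it is a geodesic with
at most one extra vertex.

If `uv` lies in a triangle, then `3γ ≤ |V|`, while the three closer sets pointing away from a
vertex `p` have `3γ` elements in total and cover the other `|V| - 1` vertices. Hence geodesics
starting at `p` have a unique first step, up to one exception. It follows that `W` spans at most
`γ` edges and sends at most five outside, so `3γ ≤ 2γ + 5`.

Otherwise `v` has two neighbours in `W`, so every later level of `W` is a single vertex: each
inner vertex of a long geodesic from `u` has at most one neighbour farther from `u`. Let `z, y,
x, k` begin a geodesic from `z` to `u`, let `f` be the third neighbour of `y`, and let `g` be a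
neighbour of `f` closer to `u`. Uniqueness as seen from `z` and from `u` leaves two
possibilities: `g = k`, giving `k` the two farther neighbours `x` and `f`, or `f` is adjacent to
`z`, giving a triangle on `zy`.
-/

section Combinatorics

variable {α β : Type*} [DecidableEq α] [DecidableEq β]

theorem injOn_erase_of_card_le_card_image_add_one {s : Finset α} {f : α → β}
    (hs : #s ≤ #(s.image f) + 1) {a b : α} (ha : a ∈ s) (hb : b ∈ s) (hab : a ≠ b)
    (hf : f a = f b) : Set.InjOn f (s.erase a) := by
  have himage : (s.erase a).image f = s.image f := by
    refine (image_subset_image (erase_subset a s)).antisymm fun c hc => ?_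
    obtain ⟨x, hx, rfl⟩ := mem_image.1 hc
    obtain rfl | hxa := eq_or_ne x a
    · exact hf ▸ mem_image_of_mem f (mem_erase.2 ⟨hab.symm, hb⟩)
    · exact mem_image_of_mem f (mem_erase.2 ⟨hxa, hx⟩)
  rw [← card_image_iff]
  refine le_antisymm card_image_le ?_
  rw [himage, card_erase_of_mem ha]
  omega

end Combinatorics

section Interedges

variable {V : Type*} {G : SimpleGraph V} [DecidableRel G.Adj]

theorem card_interedges_add_card_interedges_compl_eq [Fintype V] [DecidableEq V] {k : ℕ}
    (hreg : G.IsRegularOfDegree k) (s : Finset V) :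
    #(G.interedges s s) + #(G.interedges s sᶜ) = #s * k := by
  have hunion : G.interedges s univ = G.interedges s s ∪ G.interedges s sᶜ := by
    ext e
    simp only [mem_union, SimpleGraph.mem_interedges_iff, mem_univ, mem_compl]
    tauto
  have hdegree : ∀ p ∈ s, #{e ∈ G.interedges s univ | e.1 = p} = k := fun p hp => by
    rw [← hreg p, ← G.card_neighborFinset_eq_degree p]
    refine card_bij (fun e _ => e.2) ?_ ?_ ?_
    · rintro ⟨_, y⟩ he
      rw [mem_filter, G.mk_mem_interedges_iff] at he
      obtain ⟨⟨-, -, hadj⟩, rfl⟩ := he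
      exact (mem_neighborFinset ..).2 hadj
    · simp +contextual [Prod.ext_iff]
    · intro y hy
      exact ⟨(p, y), by simpa [SimpleGraph.mem_interedges_iff, hp] using hy, rfl⟩
  rw [← card_union_of_disjoint (G.interedges_disjoint_right s disjoint_compl_right), ← hunion,
    card_eq_sum_card_fiberwise fun e he => (G.mem_interedges_iff.1 he).1,
    sum_congr rfl hdegree, sum_const, smul_eq_mul]

theorem card_interedges_filter_lt_add_one_le {s : Finset V} {f : V → ℕ} {r : V} (hr : r ∈ s)
    (hmin : ∀ x ∈ s, f r ≤ f x)
    (hparent : ∀ p ∈ s, ∀ a ∈ s, ∀ b ∈ s, G.Adj p a → G.Adj p b → f a < f p → f b < f p → a = b) :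
    #{e ∈ G.interedges s s | f e.2 < f e.1} + 1 ≤ #s := by
  classical
  rw [← card_erase_add_one hr]
  gcongr
  refine card_le_card_of_injOn Prod.fst (fun e he => ?_) fun e he e' he' heq => ?_
  · simp only [coe_filter, SimpleGraph.mem_interedges_iff, Set.mem_ofPred_eq] at he
    refine mem_erase.2 ⟨fun h => ?_, he.1.1⟩
    have := hmin _ he.1.2.1
    rw [h] at he
    omega
  · simp only [coe_filter, SimpleGraph.mem_interedges_iff, Set.mem_ofPred_eq] at he he'
    rw [← heq] at he'
    exact Prod.ext heq
      (hparent _ he.1.1 _ he.1.2.1 _ he'.1.2.1 he.1.2.2 he'.1.2.2 he.2 he'.2)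

theorem card_interedges_filter_eq_le_two {s : Finset V} {f : V → ℕ}
    (hs : #s ≤ #(s.image f) + 1) : #{e ∈ G.interedges s s | f e.2 = f e.1} ≤ 2 := by
  classical
  obtain hempty | ⟨⟨x, y⟩, hxy⟩ := {e ∈ G.interedges s s | f e.2 = f e.1}.eq_empty_or_nonempty
  · simp [hempty]
  simp only [mem_filter, SimpleGraph.mem_interedges_iff] at hxy
  obtain ⟨⟨hx, hy, hadj⟩, hf⟩ := hxy
  have hinjx := injOn_erase_of_card_le_card_image_add_one hs hx hy hadj.ne hf.symm
  have hinjy := injOn_erase_of_card_le_card_image_add_one hs hy hx hadj.ne' hf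
  suffices h : {e ∈ G.interedges s s | f e.2 = f e.1} ⊆ {(x, y), (y, x)} from
    (card_le_card h).trans card_le_two
  rintro ⟨a, b⟩ hab
  simp only [mem_filter, SimpleGraph.mem_interedges_iff] at hab
  obtain ⟨⟨ha, hb, hadj'⟩, hf'⟩ := hab
  have hmeet : ∀ c, Set.InjOn f (s.erase c) → a = c ∨ b = c := fun c hc => by
    by_contra! hne
    exact hadj'.ne (hc (by simp [hne.1, ha]) (by simp [hne.2, hb]) hf'.symm)
  have hne := hadj.ne
  have := hmeet x hinjx
  have := hmeet y hinjy
  simp only [mem_insert, mem_singleton, Prod.mk.injEq]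
  grind

-- Edges between levels form a forest, and at most one edge lies within a level.
theorem card_interedges_self_le_two_mul_card {s : Finset V} {f : V → ℕ} {r : V} (hr : r ∈ s)
    (hmin : ∀ x ∈ s, f r ≤ f x)
    (hparent : ∀ p ∈ s, ∀ a ∈ s, ∀ b ∈ s, G.Adj p a → G.Adj p b → f a < f p → f b < f p → a = b)
    (hs : #s ≤ #(s.image f) + 1) : #(G.interedges s s) ≤ 2 * #s := by
  classical
  have hup : #{e ∈ G.interedges s s | f e.1 < f e.2} = #{e ∈ G.interedges s s | f e.2 < f e.1} :=
    card_bij (fun e _ => e.swap) (by simp +contextual [SimpleGraph.mem_interedges_iff, adj_comm])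
      (by simp) (fun e he => ⟨e.swap, by
        simp only [mem_filter, SimpleGraph.mem_interedges_iff] at he
        simp [SimpleGraph.mem_interedges_iff, he, he.1.2.2.symm], by simp⟩)
  have hcover : G.interedges s s = {e ∈ G.interedges s s | f e.2 < f e.1} ∪
      ({e ∈ G.interedges s s | f e.1 < f e.2} ∪ {e ∈ G.interedges s s | f e.2 = f e.1}) := by
    ext e
    simp only [mem_union, mem_filter]
    have := lt_trichotomy (f e.1) (f e.2)
    grind
  have hdown := card_interedges_filter_lt_add_one_le hr hmin hparent
  have hlevel := card_interedges_filter_eq_le_two (G := G) hs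
  have := card_union_le {e ∈ G.interedges s s | f e.2 < f e.1}
    ({e ∈ G.interedges s s | f e.1 < f e.2} ∪ {e ∈ G.interedges s s | f e.2 = f e.1})
  have := card_union_le {e ∈ G.interedges s s | f e.1 < f e.2}
    {e ∈ G.interedges s s | f e.2 = f e.1}
  rw [hcover]
  omega

end Interedges

section Distance

variable {V : Type*} {G : SimpleGraph V} {u v x : V}

theorem dist_le_dist_add_one_of_adj (huv : G.Adj u v) (x : V) :
    G.dist x u ≤ G.dist x v + 1 := by
  have := huv.diff_dist_adj (u := x)
  omega

theorem dist_le_dist_add_one_of_adj_left (huv : G.Adj u v) (x : V) :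
    G.dist u x ≤ G.dist v x + 1 := by
  simpa only [G.dist_comm (v := x)] using dist_le_dist_add_one_of_adj huv x

theorem exists_adj_dist_add_one_eq_left (hconn : G.Connected) (hux : u ≠ x) :
    ∃ y, G.Adj u y ∧ G.dist y x + 1 = G.dist u x := by
  obtain ⟨p, hp⟩ := hconn.exists_walk_length_eq_dist u x
  cases p with
  | nil => exact absurd rfl hux
  | cons huy q =>
    refine ⟨_, huy, le_antisymm ?_ (dist_le_dist_add_one_of_adj_left huy x)⟩
    rw [← hp, Walk.length_cons]
    exact Nat.succ_le_succ (dist_le q)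

theorem exists_adj_dist_add_one_eq (hconn : G.Connected) (hux : u ≠ x) :
    ∃ y, G.Adj u y ∧ G.dist x y + 1 = G.dist x u := by
  simpa only [G.dist_comm (u := x)] using exists_adj_dist_add_one_eq_left hconn hux

end Distance

section CloserSets

variable {V : Type*} [Fintype V] {G : SimpleGraph V} {u v x y z : V}

theorem mem_ndbW : x ∈ ndbW G u v ↔ G.dist x u < G.dist x v := by simp [ndbW]

theorem mem_ndbW_iff_dist_lt_dist : x ∈ ndbW G u v ↔ G.dist u x < G.dist v x := by
  rw [mem_ndbW, G.dist_comm, G.dist_comm (v := v)]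

theorem self_mem_ndbW (huv : G.Adj u v) : v ∈ ndbW G v u := by
  simp [mem_ndbW, dist_eq_one_iff_adj.2 huv.symm]

theorem dist_eq_of_mem_ndbW (huv : G.Adj u v) (hx : x ∈ ndbW G v u) :
    G.dist x u = G.dist x v + 1 :=
  (dist_le_dist_add_one_of_adj huv x).antisymm (mem_ndbW.1 hx)

theorem mem_ndbW_of_dist_add_dist_eq (hconn : G.Connected) (hx : x ∈ ndbW G v u)
    (hy : G.dist y x + G.dist x u = G.dist y u) : y ∈ ndbW G v u := by
  have := hconn.dist_triangle (u := y) (v := x) (w := v)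
  rw [mem_ndbW] at hx ⊢
  omega

theorem exists_mem_ndbW_dist_eq (hconn : G.Connected) {j : ℕ} (hz : z ∈ ndbW G v u)
    (hj : j ≤ G.dist z v) : ∃ y ∈ ndbW G v u, G.dist y v = j := by
  induction hn : G.dist z v generalizing z with
  | zero => exact ⟨z, hz, by omega⟩
  | succ n ih =>
    obtain hjz | hjz := hj.eq_or_lt
    · exact ⟨z, hz, hjz.symm⟩
    have hzv : z ≠ v := by rintro rfl; simp at hn
    obtain ⟨y, hzy, hy⟩ := exists_adj_dist_add_one_eq_left hconn hzv
    have hyu := dist_le_dist_add_one_of_adj_left hzy u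
    rw [mem_ndbW] at hz
    exact ih (z := y) (mem_ndbW.2 (by omega)) (by omega) (by omega)

theorem card_ndbW_le_card_image_add_one (hconn : G.Connected) {γ : ℕ} (hndb : IsNDB G γ)
    (huv : G.Adj u v) (hz : z ∈ ndbW G v u) (hγ : γ ≤ G.dist z u + 1) :
    #(ndbW G v u) ≤ #((ndbW G v u).image (G.dist · v)) + 1 := by
  have hrange : range (G.dist z u) ⊆ (ndbW G v u).image (G.dist · v) := fun j hj => by
    rw [mem_range, dist_eq_of_mem_ndbW huv hz] at hj
    exact mem_image.2 (exists_mem_ndbW_dist_eq hconn hz (by omega))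
  have := card_le_card hrange
  rw [card_range] at this
  have := (hndb u v huv).2
  omega

end CloserSets

section Cubic

variable {V : Type*} [Fintype V] {G : SimpleGraph V} [DecidableRel G.Adj]

theorem exists_third_neighbor (hreg : G.IsRegularOfDegree 3) {p a b : V} (ha : G.Adj p a)
    (hb : G.Adj p b) (hab : a ≠ b) :
    ∃ c, G.Adj p c ∧ c ≠ a ∧ c ≠ b ∧ ∀ x, G.Adj p x → x = a ∨ x = b ∨ x = c := by
  classical
  have hcard : #(((G.neighborFinset p).erase a).erase b) = 1 := by
    rw [card_erase_of_mem (by simp [hab.symm, hb]), card_erase_of_mem (by simp [ha]),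
      G.card_neighborFinset_eq_degree, hreg p]
  obtain ⟨c, hc⟩ := card_eq_one.1 hcard
  simp only [Finset.ext_iff, mem_erase, mem_neighborFinset, mem_singleton] at hc
  obtain ⟨hcb, hca, hpc⟩ := (hc c).2 rfl
  exact ⟨c, hpc, hca, hcb, fun x hx => by have := hc x; tauto⟩

theorem card_filter_adj_ndbW_le_two (hconn : G.Connected) (hreg : G.IsRegularOfDegree 3)
    {u v q : V} (hq : q ∉ ndbW G v u) (hqu : q ≠ u) : #{p ∈ ndbW G v u | G.Adj q p} ≤ 2 := by
  classical
  obtain ⟨y, hqy, hy⟩ := exists_adj_dist_add_one_eq_left hconn hqu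
  have hyv := dist_le_dist_add_one_of_adj_left hqy v
  have hyW : y ∉ ndbW G v u := by
    rw [mem_ndbW] at hq ⊢
    omega
  calc #{p ∈ ndbW G v u | G.Adj q p}
      ≤ #((G.neighborFinset q).erase y) := card_le_card fun p hp => by
        rw [mem_filter] at hp
        exact mem_erase.2 ⟨fun h => hyW (h ▸ hp.1), (mem_neighborFinset ..).2 hp.2⟩
    _ = 2 := by
        rw [card_erase_of_mem ((mem_neighborFinset ..).2 hqy), G.card_neighborFinset_eq_degree,
          hreg q]

end Cubic

section Triangle

variable {V : Type*} [Fintype V] {G : SimpleGraph V} {γ : ℕ} {u v t : V}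

-- Around a triangle the three cyclically oriented closer sets are disjoint.
theorem three_mul_le_card_of_triangle (hndb : IsNDB G γ) (huv : G.Adj u v) (hvt : G.Adj v t)
    (htu : G.Adj t u) : 3 * γ ≤ Fintype.card V := by
  classical
  have hdisj {a b c : V} (hca : G.Adj c a) : Disjoint (ndbW G a b) (ndbW G b c) :=
    disjoint_left.2 fun x hab hbc => by
      have := dist_le_dist_add_one_of_adj hca x
      rw [mem_ndbW] at hab hbc
      omega
  have hcard := card_le_univ (ndbW G u v ∪ ndbW G v t ∪ ndbW G t u)
  rw [card_union_of_disjoint (disjoint_union_left.2 ⟨(hdisj hvt).symm, hdisj huv⟩),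
    card_union_of_disjoint (hdisj htu), (hndb u v huv).1, (hndb v t hvt).1, (hndb t u htu).1]
    at hcard
  omega

theorem dist_add_one_eq_of_mem_ndbW_of_triangle (hconn : G.Connected) (htu : G.Adj t u)
    {v' p : V} (hv' : ∀ x, G.Adj v x → x = u ∨ x = t ∨ x = v') (hp : p ∈ ndbW G v u)
    (hpv : p ≠ v) : G.dist p v' + 1 = G.dist p v := by
  obtain ⟨y, hvy, hy⟩ := exists_adj_dist_add_one_eq hconn hpv.symm
  have hut := dist_le_dist_add_one_of_adj htu.symm p
  rw [mem_ndbW] at hp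
  obtain rfl | rfl | rfl := hv' y hvy <;> omega

theorem exists_sdiff_ndbW_eq_singleton_of_triangle [DecidableEq V] (hconn : G.Connected)
    (hndb : IsNDB G γ) (huv : G.Adj u v) (htu : G.Adj t u) {v' : V} (hvv' : G.Adj v v')
    (hv' : ∀ x, G.Adj v x → x = u ∨ x = t ∨ x = v') :
    ∃ q, ndbW G v' v \ ndbW G v u = {q} := by
  have hvW : v ∈ ndbW G v u := self_mem_ndbW huv
  have hinter : ndbW G v u ∩ ndbW G v' v = (ndbW G v u).erase v := by
    ext p
    rw [mem_inter, mem_erase, and_comm, and_congr_left_iff]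
    refine fun hp => ⟨?_, fun hpv => ?_⟩
    · rintro hpP rfl
      simp [mem_ndbW] at hpP
    · have := dist_add_one_eq_of_mem_ndbW_of_triangle hconn htu hv' hp hpv
      exact mem_ndbW.2 (by omega)
  have hpos := card_pos.2 ⟨v, hvW⟩
  rw [← card_eq_one, card_sdiff, hinter, card_erase_of_mem hvW, (hndb v v' hvv').2]
  rw [(hndb u v huv).2] at hpos ⊢
  omega

variable [DecidableRel G.Adj]

-- The pairs `(y, x)` with `x ∈ ndbW G y p`, for the three neighbours `y` of `p`, number `3γ ≤ |V|`,
-- and their second entries exhaust the `|V| - 1` vertices other than `p`.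
theorem eq_and_eq_or_eq_of_mem_ndbW_of_triangle (hconn : G.Connected)
    (hreg : G.IsRegularOfDegree 3) (hndb : IsNDB G γ) (huv : G.Adj u v) (hvt : G.Adj v t)
    (htu : G.Adj t u) {p x x' a b a' b' : V} (ha : G.Adj p a) (hb : G.Adj p b) (hab : a ≠ b)
    (hxa : x ∈ ndbW G a p) (hxb : x ∈ ndbW G b p) (ha' : G.Adj p a') (hb' : G.Adj p b')
    (hab' : a' ≠ b') (hxa' : x' ∈ ndbW G a' p) (hxb' : x' ∈ ndbW G b' p) :
    x' = x ∧ (b' = a ∨ b' = b) := by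
  classical
  set s : Finset ((_ : V) × V) := (G.neighborFinset p).sigma fun y => ndbW G y p with hs
  have hmem {y w : V} : (⟨y, w⟩ : (_ : V) × V) ∈ s ↔ G.Adj p y ∧ w ∈ ndbW G y p := by simp [hs]
  have hcard : #s = 3 * γ := by
    rw [hs, card_sigma, sum_congr rfl fun y hy => (hndb p y ((mem_neighborFinset ..).1 hy)).2,
      sum_const, G.card_neighborFinset_eq_degree, hreg p, smul_eq_mul]
  have himage : univ.erase p ⊆ s.image Sigma.snd := fun w hw => by
    obtain ⟨y, hpy, hy⟩ := exists_adj_dist_add_one_eq hconn (ne_of_mem_erase hw).symm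
    exact mem_image.2 ⟨⟨y, w⟩, hmem.2 ⟨hpy, mem_ndbW.2 (by omega)⟩, rfl⟩
  have hle : #s ≤ #(s.image Sigma.snd) + 1 := by
    have := card_le_card himage
    rw [card_erase_of_mem (mem_univ p), card_univ] at this
    have := three_mul_le_card_of_triangle hndb huv hvt htu
    omega
  have hinja := injOn_erase_of_card_le_card_image_add_one hle (hmem.2 ⟨ha, hxa⟩)
    (hmem.2 ⟨hb, hxb⟩) (by simpa using hab) rfl
  have hinjb := injOn_erase_of_card_le_card_image_add_one hle (hmem.2 ⟨hb, hxb⟩)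
    (hmem.2 ⟨ha, hxa⟩) (by simpa using hab.symm) rfl
  have hmeet {c : V} (hc : Set.InjOn Sigma.snd (s.erase ⟨c, x⟩ : Set ((_ : V) × V))) :
      x' = x ∧ (a' = c ∨ b' = c) := by
    by_contra hne
    refine hab' (congrArg Sigma.fst (@hc ⟨a', x'⟩ ?_ ⟨b', x'⟩ ?_ rfl))
    · rw [mem_coe, mem_erase, hmem]
      exact ⟨by simp only [ne_eq, Sigma.mk.injEq, heq_eq_eq]; tauto, ha', hxa'⟩
    · rw [mem_coe, mem_erase, hmem]
      exact ⟨by simp only [ne_eq, Sigma.mk.injEq, heq_eq_eq]; tauto, hb', hxb'⟩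
  have := hmeet hinja
  have := hmeet hinjb
  grind

theorem exists_forall_adj_ndbW_of_triangle (hconn : G.Connected) (hreg : G.IsRegularOfDegree 3)
    (hndb : IsNDB G γ) (huv : G.Adj u v) (hvt : G.Adj v t) (htu : G.Adj t u) :
    ∃ q ∉ ndbW G v u, q ≠ u ∧ ∀ p ∈ ndbW G v u, ∀ r ∉ ndbW G v u, G.Adj p r →
      r = q ∨ (p = v ∧ (r = u ∨ r = t)) ∨ (G.dist r u < G.dist p u ∧ p ∈ ndbW G t u) := by
  classical
  -- `q` is the only vertex outside `ndbW G v u` that is closer to the third neighbour of `v`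
  -- than to `v`.
  obtain ⟨v', hvv', hv'u, -, hv'⟩ := exists_third_neighbor hreg huv.symm hvt htu.ne'
  obtain ⟨q, hq⟩ := exists_sdiff_ndbW_eq_singleton_of_triangle hconn hndb huv htu hvv' hv'
  simp only [Finset.ext_iff, mem_sdiff, mem_singleton] at hq
  obtain ⟨hqP, hqW⟩ := (hq q).2 rfl
  refine ⟨q, hqW, ?_, fun p hp r hr hpr => or_iff_not_imp_left.2 fun hrq => ?_⟩
  · rintro rfl
    have := hconn.pos_dist_of_ne hv'u.symm
    rw [mem_ndbW, dist_eq_one_iff_adj.2 huv] at hqP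
    omega
  have hrP : r ∉ ndbW G v' v := fun h => hrq ((hq r).1 ⟨h, hr⟩)
  obtain rfl | hpv := eq_or_ne p v
  · obtain h | h | rfl := hv' r hpr
    · exact .inl ⟨rfl, .inl h⟩
    · exact .inl ⟨rfl, .inr h⟩
    · exact absurd (self_mem_ndbW hvv') hrP
  have hpv' := dist_add_one_eq_of_mem_ndbW_of_triangle hconn htu hv' hp hpv
  have hrv' := dist_le_dist_add_one_of_adj_left hpr.symm v'
  have hpu := dist_le_dist_add_one_of_adj_left hpr u
  have hrv : r ≠ v := by
    rintro rfl
    exact hr (self_mem_ndbW huv)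
  obtain ⟨y, hvy, hy⟩ := exists_adj_dist_add_one_eq hconn hrv.symm
  have hpt := dist_le_dist_add_one_of_adj_left hpr t
  rw [mem_ndbW] at hp hr hrP
  obtain rfl | rfl | rfl := hv' y hvy
  · omega
  · exact .inr ⟨by omega, mem_ndbW.2 (by omega)⟩
  · omega

theorem eq_of_adj_of_mem_ndbW_of_triangle (hconn : G.Connected) (hreg : G.IsRegularOfDegree 3)
    (hndb : IsNDB G γ) (huv : G.Adj u v) (hvt : G.Adj v t) (htu : G.Adj t u) {p a b : V}
    (ha : a ∈ ndbW G v u) (hb : b ∈ ndbW G v u) (hpa : G.Adj p a) (hpb : G.Adj p b)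
    (hav : G.dist a v < G.dist p v) (hbv : G.dist b v < G.dist p v)
    (hp : p ∈ ndbW G v u) : a = b := by
  by_contra hab
  have hau := dist_eq_of_mem_ndbW huv ha
  have hbu := dist_eq_of_mem_ndbW huv hb
  have hpu := dist_eq_of_mem_ndbW huv hp
  refine huv.ne (eq_and_eq_or_eq_of_mem_ndbW_of_triangle hconn hreg hndb huv hvt htu
    (x := v) (x' := u) hpa hpb hab ?_ ?_ hpa hpb hab ?_ ?_).1
  all_goals
    rw [mem_ndbW_iff_dist_lt_dist]
    omega

theorem eq_and_eq_of_adj_compl_ndbW_of_triangle (hconn : G.Connected)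
    (hreg : G.IsRegularOfDegree 3) (hndb : IsNDB G γ) (huv : G.Adj u v) (hvt : G.Adj v t)
    (htu : G.Adj t u) {p r p' r' : V} (hp : p ∈ ndbW G v u) (hr : r ∉ ndbW G v u)
    (hpr : G.Adj p r) (hru : G.dist r u < G.dist p u) (hpt : p ∈ ndbW G t u)
    (hp' : p' ∈ ndbW G v u) (hr' : r' ∉ ndbW G v u) (hpr' : G.Adj p' r')
    (hru' : G.dist r' u < G.dist p' u) (hpt' : p' ∈ ndbW G t u) : p' = p ∧ r' = r := by
  obtain ⟨rfl, -⟩ := eq_and_eq_or_eq_of_mem_ndbW_of_triangle hconn hreg hndb huv hvt htu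
    huv htu.symm hvt.ne hp hpt huv htu.symm hvt.ne hp' hpt'
  have hpv : p' ≠ v := by
    rintro rfl
    rw [mem_ndbW, dist_eq_one_iff_adj.2 hvt, dist_eq_one_iff_adj.2 huv.symm] at hpt
    omega
  obtain ⟨a, hpa, hav⟩ := exists_adj_dist_add_one_eq_left hconn hpv
  have hpu := dist_eq_of_mem_ndbW huv hp
  have hua := dist_le_dist_add_one_of_adj huv a
  have hau := dist_le_dist_add_one_of_adj_left hpa u
  have haW : a ∈ ndbW G v u := mem_ndbW.2 (by omega)
  have hcloser {y : V} (hy : G.dist y u < G.dist p' u) : u ∈ ndbW G y p' :=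
    mem_ndbW_iff_dist_lt_dist.2 hy
  have har {y : V} (hy : y ∉ ndbW G v u) : a ≠ y := fun h => hy (h ▸ haW)
  obtain ⟨-, h | h⟩ := eq_and_eq_or_eq_of_mem_ndbW_of_triangle hconn hreg hndb huv hvt htu
    hpa hpr (har hr) (hcloser (by omega)) (hcloser hru)
    hpa hpr' (har hr') (hcloser (by omega)) (hcloser hru')
  · exact absurd h.symm (har hr')
  · exact ⟨rfl, h⟩

theorem card_interedges_ndbW_compl_le_of_triangle [DecidableEq V] (hconn : G.Connected)
    (hreg : G.IsRegularOfDegree 3) (hndb : IsNDB G γ) (huv : G.Adj u v) (hvt : G.Adj v t)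
    (htu : G.Adj t u) : #(G.interedges (ndbW G v u) (ndbW G v u)ᶜ) ≤ 5 := by
  obtain ⟨q, hqW, hqu, hq⟩ := exists_forall_adj_ndbW_of_triangle hconn hreg hndb huv hvt htu
  set W := ndbW G v u
  set S := {e ∈ G.interedges W Wᶜ | G.dist e.2 u < G.dist e.1 u ∧ e.1 ∈ ndbW G t u} with hS
  have hSone : #S ≤ 1 := card_le_one.2 fun e he e' he' => by
    simp only [hS, mem_filter, SimpleGraph.mem_interedges_iff, mem_compl] at he he'
    obtain ⟨⟨hp, hr, hpr⟩, hru, hpt⟩ := he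
    obtain ⟨⟨hp', hr', hpr'⟩, hru', hpt'⟩ := he'
    obtain ⟨h₁, h₂⟩ := eq_and_eq_of_adj_compl_ndbW_of_triangle hconn hreg hndb huv hvt htu
      hp' hr' hpr' hru' hpt' hp hr hpr hru hpt
    exact Prod.ext h₁ h₂
  have hcover : G.interedges W Wᶜ ⊆ {p ∈ W | G.Adj q p} ×ˢ {q} ∪ ({(v, u), (v, t)} ∪ S) := by
    rintro ⟨p, r⟩ he
    obtain ⟨hp, hr, hpr⟩ := G.mk_mem_interedges_iff.1 he
    have := hq p hp r (mem_compl.1 hr) hpr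
    simp only [hS, mem_union, mem_product, mem_filter, mem_singleton, mem_insert, Prod.mk.injEq]
    obtain rfl | h | h := this
    · exact .inl ⟨⟨hp, hpr.symm⟩, rfl⟩
    · exact .inr (.inl (by tauto))
    · exact .inr (.inr ⟨he, h⟩)
  calc #(G.interedges W Wᶜ)
      ≤ #({p ∈ W | G.Adj q p} ×ˢ {q} ∪ ({(v, u), (v, t)} ∪ S)) := card_le_card hcover
    _ ≤ #({p ∈ W | G.Adj q p} ×ˢ {q}) + (#{(v, u), (v, t)} + #S) :=
        (card_union_le _ _).trans (by gcongr; exact card_union_le _ _)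
    _ ≤ 2 + (2 + 1) := by
        gcongr
        · rw [card_product, card_singleton, mul_one]
          exact card_filter_adj_ndbW_le_two hconn hreg hqW hqu
        · exact card_le_two

theorem le_five_of_triangle (hconn : G.Connected) (hreg : G.IsRegularOfDegree 3)
    (hndb : IsNDB G γ) (huv : G.Adj u v) (hvt : G.Adj v t) (htu : G.Adj t u) {z : V}
    (hz : z ∈ ndbW G v u) (hγ : γ ≤ G.dist z u + 1) : γ ≤ 5 := by
  classical
  have hvW : v ∈ ndbW G v u := self_mem_ndbW huv
  have hinternal : #(G.interedges (ndbW G v u) (ndbW G v u)) ≤ 2 * #(ndbW G v u) :=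
    card_interedges_self_le_two_mul_card hvW (f := (G.dist · v)) (by simp)
      (fun p hp a ha b hb hpa hpb hav hbv => eq_of_adj_of_mem_ndbW_of_triangle hconn hreg hndb
        huv hvt htu ha hb hpa hpb hav hbv hp)
      (card_ndbW_le_card_image_add_one hconn hndb huv hz hγ)
  have hexternal := card_interedges_ndbW_compl_le_of_triangle hconn hreg hndb huv hvt htu
  have hdegree := card_interedges_add_card_interedges_compl_eq hreg (ndbW G v u)
  rw [(hndb u v huv).2] at hinternal hdegree
  omega

end Triangle

section Geodesics

variable {V : Type*} [Fintype V] {G : SimpleGraph V} [DecidableRel G.Adj] {γ : ℕ} {u v y z : V}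

theorem eq_of_mem_ndbW_of_dist_eq (hconn : G.Connected) (hreg : G.IsRegularOfDegree 3)
    (hndb : IsNDB G γ) (hγ : 6 ≤ γ) (huv : G.Adj u v) (hz : z ∈ ndbW G v u)
    (hzγ : γ ≤ G.dist z u + 1) {a b : V} (ha : a ∈ ndbW G v u) (hb : b ∈ ndbW G v u)
    (hau : 3 ≤ G.dist a u) (hab : G.dist a u = G.dist b u) : a = b := by
  classical
  have hchild {x : V} (hvx : G.Adj v x) (hxu : x ≠ u) : x ∈ ndbW G v u := by
    rw [mem_ndbW, dist_eq_one_iff_adj.2 hvx.symm]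
    refine hconn.one_lt_dist_of_ne_of_not_adj hxu fun h => ?_
    have := le_five_of_triangle hconn hreg hndb huv hvx h hz hzγ
    omega
  have hcard : #((G.neighborFinset v).erase u) = 2 := by
    rw [card_erase_of_mem (by simp [huv.symm]), G.card_neighborFinset_eq_degree, hreg v]
  obtain ⟨x, y, hxy, hpair⟩ := card_eq_two.1 hcard
  simp only [Finset.ext_iff, mem_erase, mem_neighborFinset, mem_insert, mem_singleton] at hpair
  obtain ⟨hxu, hvx⟩ := (hpair x).2 (.inl rfl)
  obtain ⟨hyu, hvy⟩ := (hpair y).2 (.inr rfl)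
  have hxv := dist_eq_one_iff_adj.2 hvx.symm
  have hinj := injOn_erase_of_card_le_card_image_add_one
    (card_ndbW_le_card_image_add_one hconn hndb huv hz hzγ) (hchild hvx hxu) (hchild hvy hyu)
    hxy (hxv.trans (dist_eq_one_iff_adj.2 hvy.symm).symm)
  have hav := dist_eq_of_mem_ndbW huv ha
  have hbv := dist_eq_of_mem_ndbW huv hb
  refine hinj (mem_erase.2 ⟨?_, ha⟩) (mem_erase.2 ⟨?_, hb⟩) (show G.dist a v = G.dist b v by omega)
  all_goals
    rintro rfl
    omega

theorem eq_of_adj_of_dist_add_dist_eq (hconn : G.Connected) (hreg : G.IsRegularOfDegree 3)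
    (hndb : IsNDB G γ) (hγ : 6 ≤ γ) (hzγ : γ ≤ G.dist z u + 1) {k a b : V}
    (hk : G.dist z k + G.dist k u = G.dist z u) (hku : 2 ≤ G.dist k u)
    (hka : G.Adj k a) (hkb : G.Adj k b) (ha : G.dist a u = G.dist k u + 1)
    (hb : G.dist b u = G.dist k u + 1) : a = b := by
  have huk : u ≠ k := by
    rintro rfl
    simp at hku
  obtain ⟨v, huv, hv⟩ := exists_adj_dist_add_one_eq hconn huk
  have hkW : k ∈ ndbW G v u := mem_ndbW.2 (by omega)
  have hchild {x : V} (hkx : G.Adj k x) (hx : G.dist x u = G.dist k u + 1) : x ∈ ndbW G v u :=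
    mem_ndbW_of_dist_add_dist_eq hconn hkW (by rw [dist_eq_one_iff_adj.2 hkx.symm]; omega)
  exact eq_of_mem_ndbW_of_dist_eq hconn hreg hndb hγ huv
    (mem_ndbW_of_dist_add_dist_eq hconn hkW hk) hzγ (hchild hka ha) (hchild hkb hb)
    (by omega) (by omega)

theorem adj_of_adj_of_dist_eq_two (hconn : G.Connected) (hreg : G.IsRegularOfDegree 3)
    (hndb : IsNDB G γ) (hγ : 6 ≤ γ) (hzγ : γ ≤ G.dist z u + 1) {f g : V} (hgf : G.Adj g f)
    (hf : G.dist f u = G.dist g u + 1) (hzg : G.dist z g = 2)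
    (hg : G.dist z g + G.dist g u = G.dist z u) : G.Adj z f := by
  have hzg' : z ≠ g := by
    rintro rfl
    simp at hzg
  obtain ⟨h, hzh, hgh⟩ := exists_adj_dist_add_one_eq hconn hzg'
  rw [G.dist_comm (u := g) (v := z)] at hgh
  have hadj : G.Adj g h := dist_eq_one_iff_adj.1 (by omega)
  have hzu := dist_le_dist_add_one_of_adj_left hzh u
  have hhu := dist_le_dist_add_one_of_adj_left hadj.symm u
  obtain rfl : h = f := eq_of_adj_of_dist_add_dist_eq hconn hreg hndb hγ hzγ hg (by omega)
    hadj hgf (by omega) hf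
  exact hzh

theorem dist_le_two_of_adj_of_dist_add_one_eq (hconn : G.Connected) (hreg : G.IsRegularOfDegree 3)
    (hndb : IsNDB G γ) (hγ : 6 ≤ γ) (hzγ : γ ≤ G.dist z u + 1) {x k f g : V}
    (hzy : G.Adj z y) (hy : G.dist y u + 1 = G.dist z u)
    (hyx : G.Adj y x) (hx : G.dist x u + 1 = G.dist y u)
    (hxk : G.Adj x k) (hk : G.dist k u + 1 = G.dist x u)
    (hyf : G.Adj y f) (hfx : f ≠ x) (hfg : G.Adj f g) (hg : G.dist g u + 1 = G.dist f u) :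
    G.dist g z ≤ 2 := by
  by_contra! hgz
  have hnear {a b : V} (hya : G.Adj y a) (hab : G.Adj a b) (hb : 3 ≤ G.dist b z) :
      b ∈ ndbW G y z ∧ G.dist b z = 3 := by
    have h₁ := dist_le_dist_add_one_of_adj_left hab.symm y
    have h₂ := dist_le_dist_add_one_of_adj hzy b
    rw [dist_eq_one_iff_adj.2 hya.symm] at h₁
    exact ⟨mem_ndbW.2 (by omega), by omega⟩
  have hkz : 3 ≤ G.dist k z := by
    have := hconn.dist_triangle (u := z) (v := k) (w := u)
    rw [G.dist_comm (u := z) (v := k)] at this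
    omega
  obtain ⟨hgW, hgz⟩ := hnear hyf hfg hgz
  obtain ⟨hkW, hkz⟩ := hnear hyx hxk hkz
  have huW : u ∈ ndbW G y z := mem_ndbW_iff_dist_lt_dist.2 (by omega)
  obtain rfl : g = k := eq_of_mem_ndbW_of_dist_eq hconn hreg hndb hγ hzy huW
    (by rwa [G.dist_comm]) hgW hkW hgz.ge (hgz.trans hkz.symm)
  refine hfx (eq_of_adj_of_dist_add_dist_eq hconn hreg hndb hγ hzγ (k := g) ?_ ?_
    hfg.symm hxk.symm hg.symm hk.symm)
  · rw [G.dist_comm]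
    omega
  · omega

end Geodesics

theorem stmt_8_general {V : Type*} [Fintype V] {G : SimpleGraph V} [DecidableRel G.Adj] {γ : ℕ}
    (hconn : G.Connected) (hreg : G.IsRegularOfDegree 3) (hndb : IsNDB G γ) {u z : V}
    (hzγ : γ ≤ G.dist z u + 1) : γ ≤ 5 := by
  by_contra! hγ
  have hne {a : V} (ha : 0 < G.dist a u) : a ≠ u := fun h => by simp [h] at ha
  obtain ⟨y, hzy, hy⟩ := exists_adj_dist_add_one_eq_left hconn (hne (a := z) (by omega))
  obtain ⟨x, hyx, hx⟩ := exists_adj_dist_add_one_eq_left hconn (hne (a := y) (by omega))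
  obtain ⟨k, hxk, hk⟩ := exists_adj_dist_add_one_eq_left hconn (hne (a := x) (by omega))
  have hzx : z ≠ x := by rintro rfl; omega
  obtain ⟨f, hyf, hfz, hfx, -⟩ := exists_third_neighbor hreg hzy.symm hyx hzx
  have hyf' := dist_le_dist_add_one_of_adj_left hyf u
  have hfy' := dist_le_dist_add_one_of_adj_left hyf.symm u
  have hfu : G.dist f u < G.dist z u := by
    by_contra! h
    refine hfz (eq_of_adj_of_dist_add_dist_eq hconn hreg hndb hγ hzγ ?_ (by omega)
      hyf hzy.symm (by omega) hy.symm)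
    rw [dist_eq_one_iff_adj.2 hzy]
    omega
  obtain ⟨g, hfg, hg⟩ := exists_adj_dist_add_one_eq_left hconn (hne (a := f) (by omega))
  have hgz : G.dist g z ≤ 2 :=
    dist_le_two_of_adj_of_dist_add_one_eq hconn hreg hndb hγ hzγ hzy hy hyx hx hxk hk hyf hfx hfg hg
  have hzgu := hconn.dist_triangle (u := z) (v := g) (w := u)
  rw [G.dist_comm] at hgz
  have hzf : G.Adj z f := adj_of_adj_of_dist_eq_two hconn hreg hndb hγ hzγ hfg.symm hg.symm
    (by omega) (by omega)
  have huW : u ∈ ndbW G y z := mem_ndbW_iff_dist_lt_dist.2 (by omega)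
  have := le_five_of_triangle hconn hreg hndb hzy hyf hzf.symm huW (by rwa [G.dist_comm])
  omega

/-- A regular NDB graph with valency `3`, diameter `d ≥ 3` and
`γ = d + 1` has `d ≠ 5`. -/
theorem stmt_8 {V : Type*} [Fintype V] (G : SimpleGraph V) [DecidableRel G.Adj]
    (hconn : G.Connected) (d : ℕ) (hreg : G.IsRegularOfDegree 3)
    (hd : 3 ≤ d) (hdiam : HasDiam G d) (hndb : IsNDB G (d + 1)) :
    d ≠ 5 := by
  obtain ⟨-, z, u, rfl⟩ := hdiam
  have := stmt_8_general hconn hreg hndb le_rfl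
  omega
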